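/- For every m ∈ (0,1) there is a spongy set X ⊆ [0,1] (with respect to Lebesgue measure λ on ℝ) such that inf X = 0, sup X = 1, and λ(X) = m. Moreover X can be taken to be open or to be closed, and furthermore the construction can be arranged either so that the density of X fails to exist at both 0 and 1 (positive oscillation at 0 and 1), or so that the density of X exists at both 0 and 1 (zero oscillation at 0 and 1). -/

import Mathlib

open MeasureTheory Metric Set Filter Topology

/-- The density of a set `A` at a point `x`: the limit, as `ε → 0⁺`, of
`λ(A ∩ (x−ε, x+ε))/(2ε)` (here expressed via open balls). -/
def HasDensity (A : Set ℝ) (x : ℝ) (v : ℝ) : Prop :=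
  Tendsto (fun e : ℝ => (volume (A ∩ ball x e)).toReal / (volume (ball x e)).toReal)
    (𝓝[>] (0 : ℝ)) (𝓝 v)

/-- `S` is spongy: there is no point at which the density of `S` exists and lies strictly
between `0` and `1`, but there is a point at which the density of `S` does not exist. -/
def IsSpongy (S : Set ℝ) : Prop :=
  (∀ (x v : ℝ), 0 < v → v < 1 → ¬ HasDensity S x v) ∧
  (∃ x : ℝ, ¬ ∃ v : ℝ, HasDensity S x v)

/-- The basic requirements: `X ⊆ [0,1]`, measurable, spongy, `inf X = 0`, `sup X = 1`, and
`λ(X) = m`. -/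
def GoodSpongy (m : ℝ) (X : Set ℝ) : Prop :=
  X ⊆ Icc 0 1 ∧ MeasurableSet X ∧ IsSpongy X ∧
    sInf X = 0 ∧ sSup X = 1 ∧ volume X = ENNReal.ofReal m

/-- No real number strictly between `0` and `1` is the density of `A` at `x`. -/
def NoIntermediateDensityAt (A : Set ℝ) (x : ℝ) : Prop :=
  ∀ v : ℝ, 0 < v → v < 1 → ¬ HasDensity A x v

section Density

variable {A B : Set ℝ} {x v : ℝ}

lemma volume_affine_preimage {c : ℝ} (hc : c ≠ 0) (d : ℝ) (A : Set ℝ) :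
    volume ((fun x => c * x + d) ⁻¹' A) = ENNReal.ofReal |c⁻¹| * volume A := by
  have h : (fun x => c * x + d) ⁻¹' A = (c * ·) ⁻¹' ((· + d) ⁻¹' A) := rfl
  rw [h, Real.volume_preimage_mul_left hc, measure_preimage_add_right]

lemma affine_preimage_ball {c : ℝ} (hc : c ≠ 0) (d x e : ℝ) :
    (fun x => c * x + d) ⁻¹' ball (c * x + d) (|c| * e) = ball x e := by
  ext y
  simp only [mem_preimage, mem_ball, Real.dist_eq, add_sub_add_right_eq_sub, ← mul_sub, abs_mul]
  exact mul_lt_mul_iff_right₀ (abs_pos.2 hc)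

lemma densityRatio_affine_preimage {c : ℝ} (hc : c ≠ 0) (d : ℝ) (A : Set ℝ) (x e : ℝ) :
    (volume ((fun x => c * x + d) ⁻¹' A ∩ ball x e)).toReal / (volume (ball x e)).toReal =
      (volume (A ∩ ball (c * x + d) (|c| * e))).toReal /
        (volume (ball (c * x + d) (|c| * e))).toReal := by
  rw [← affine_preimage_ball hc d x e, ← preimage_inter, volume_affine_preimage hc,
    volume_affine_preimage hc, ENNReal.toReal_mul, ENNReal.toReal_mul, mul_div_mul_left]
  rw [ENNReal.toReal_ofReal (abs_nonneg _)]
  exact abs_ne_zero.2 (inv_ne_zero hc)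

lemma tendsto_mul_nhdsGT_zero {c : ℝ} (hc : 0 < c) :
    Tendsto (fun e : ℝ => c * e) (𝓝[>] 0) (𝓝[>] 0) := by
  refine tendsto_nhdsWithin_iff.2 ⟨?_, ?_⟩
  · have : Tendsto (fun e : ℝ => c * e) (𝓝 0) (𝓝 (c * 0)) :=
      (continuous_const.mul continuous_id).tendsto 0
    rw [mul_zero] at this
    exact this.mono_left nhdsWithin_le_nhds
  · filter_upwards [self_mem_nhdsWithin] with e he
    exact mul_pos hc he

lemma HasDensity.affine_preimage {c : ℝ} (hc : c ≠ 0) (d : ℝ) (h : HasDensity A (c * x + d) v) :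
    HasDensity ((fun x => c * x + d) ⁻¹' A) x v := by
  unfold HasDensity
  simp_rw [densityRatio_affine_preimage hc]
  exact h.comp (tendsto_mul_nhdsGT_zero (abs_pos.2 hc))

lemma hasDensity_affine_preimage {c : ℝ} (hc : c ≠ 0) (d : ℝ) :
    HasDensity ((fun x => c * x + d) ⁻¹' A) x v ↔ HasDensity A (c * x + d) v := by
  refine ⟨fun h => ?_, HasDensity.affine_preimage hc d⟩
  have e : ∀ y, c * (c⁻¹ * y + -(c⁻¹ * d)) + d = y := fun y => by field_simp; ring
  have hx : c⁻¹ * (c * x + d) + -(c⁻¹ * d) = x := by field_simp; ring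
  have h' := HasDensity.affine_preimage (A := (fun x => c * x + d) ⁻¹' A) (x := c * x + d) (v := v)
    (inv_ne_zero hc) (-(c⁻¹ * d)) (by rwa [hx])
  rwa [← preimage_comp, show (fun x => c * x + d) ∘ (fun x => c⁻¹ * x + -(c⁻¹ * d)) = id from
    funext e, preimage_id] at h'

lemma NoIntermediateDensityAt.affine_preimage {c : ℝ} (hc : c ≠ 0) (d : ℝ)
    (h : NoIntermediateDensityAt A (c * x + d)) :
    NoIntermediateDensityAt ((fun x => c * x + d) ⁻¹' A) x :=
  fun v h0 h1 hv => h v h0 h1 ((hasDensity_affine_preimage hc d).1 hv)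

lemma HasDensity.congr (hAB : ∀ᶠ y in 𝓝 x, y ∈ A ↔ y ∈ B) (h : HasDensity A x v) :
    HasDensity B x v := by
  obtain ⟨δ, hδ, hb⟩ := Metric.eventually_nhds_iff_ball.1 hAB
  refine Tendsto.congr' ?_ h
  filter_upwards [Ioo_mem_nhdsGT hδ] with e he
  have : A ∩ ball x e = B ∩ ball x e := by
    ext y
    simp only [mem_inter_iff, and_congr_left_iff]
    exact fun hy => hb y (ball_subset_ball he.2.le hy)
  rw [this]

lemma NoIntermediateDensityAt.congr (hAB : ∀ᶠ y in 𝓝 x, y ∈ A ↔ y ∈ B)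
    (h : NoIntermediateDensityAt B x) : NoIntermediateDensityAt A x :=
  fun v h0 h1 hv => h v h0 h1 (hv.congr hAB)

lemma hasDensity_congr_ae (hAB : A =ᵐ[volume] B) : HasDensity A x v ↔ HasDensity B x v := by
  have (e : ℝ) : volume (A ∩ ball x e) = volume (B ∩ ball x e) :=
    measure_congr (hAB.inter (ae_eq_refl _))
  simp only [HasDensity, this]

lemma HasDensity.unique {w : ℝ} (hv : HasDensity A x v) (hw : HasDensity A x w) : v = w :=
  tendsto_nhds_unique hv hw

lemma hasDensity_empty (x : ℝ) : HasDensity ∅ x 0 := by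
  simp [HasDensity]

lemma hasDensity_univ (x : ℝ) : HasDensity univ x 1 := by
  refine tendsto_const_nhds.congr' ?_
  filter_upwards [self_mem_nhdsWithin] with e he
  have he' : (0 : ℝ) < e := he
  rw [univ_inter, div_self]
  rw [Real.volume_ball, ENNReal.toReal_ofReal (by positivity)]
  positivity

lemma noIntermediateDensityAt_of_eventually_mem (h : ∀ᶠ y in 𝓝 x, y ∈ A) :
    NoIntermediateDensityAt A x := fun v _ h1 hv => by
  have := (hv.congr (B := univ) (h.mono fun y hy => by simp [hy])).unique (hasDensity_univ x)
  linarith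

lemma hasDensity_zero_of_eventually_notMem (h : ∀ᶠ y in 𝓝 x, y ∉ A) : HasDensity A x 0 :=
  (hasDensity_empty x).congr (h.mono fun y hy => by simp [hy])

lemma noIntermediateDensityAt_of_hasDensity_zero (h : HasDensity A x 0) :
    NoIntermediateDensityAt A x := fun v h0 _ hv => by
  have := hv.unique h
  linarith

lemma noIntermediateDensityAt_of_eventually_notMem (h : ∀ᶠ y in 𝓝 x, y ∉ A) :
    NoIntermediateDensityAt A x :=
  noIntermediateDensityAt_of_hasDensity_zero (hasDensity_zero_of_eventually_notMem h)

lemma volume_inter_annulus (A : Set ℝ) (x : ℝ) {a b : ℝ} (hab : a ≤ b) :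
    (volume (A ∩ (ball x b \ ball x a))).toReal =
      (volume (A ∩ ball x b)).toReal - (volume (A ∩ ball x a)).toReal := by
  have h := measure_inter_add_sdiff (μ := volume) (A ∩ ball x b) (measurableSet_ball (x := x) (ε := a))
  rw [inter_assoc, inter_eq_self_of_subset_right (ball_subset_ball hab), inter_sdiff_assoc] at h
  have hfb : volume (A ∩ (ball x b \ ball x a)) ≠ ⊤ :=
    ((measure_mono (inter_subset_right.trans sdiff_subset)).trans_lt measure_ball_lt_top).ne
  have hfa : volume (A ∩ ball x a) ≠ ⊤ :=
    ((measure_mono inter_subset_right).trans_lt measure_ball_lt_top).ne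
  rw [← h, ENNReal.toReal_add hfa hfb]
  ring

end Density

/-- A set that passes from full on the left of `0` to empty on the right of `1`, and whose trace on
`[0, 1]` is made of three rescaled copies of itself (the middle one reversed). -/
structure IsTransition (S : Set ℝ) : Prop where
  mem_of_neg : ∀ t, t < 0 → t ∈ S
  notMem_of_one_lt : ∀ t, 1 < t → t ∉ S
  left : ∀ t, 10 * t < 3 → (t ∈ S ↔ 10 * t ∈ S)
  mid : ∀ t, 1 < 10 * t → 10 * t < 8 → (t ∈ S ↔ 4 - 10 * t ∈ S)
  right : ∀ t, 6 < 10 * t → (t ∈ S ↔ 10 * t - 9 ∈ S)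

/-- The smallest set containing `B` and stable under the three contractions of the transition
self-similarity. -/
inductive TransitionHull (B : Set ℝ) : ℝ → Prop
  | base (t : ℝ) : t ∈ B → TransitionHull B t
  | left (t : ℝ) : 10 * t < 3 → TransitionHull B (10 * t) → TransitionHull B t
  | mid (t : ℝ) : 1 < 10 * t → 10 * t < 8 → TransitionHull B (4 - 10 * t) → TransitionHull B t
  | right (t : ℝ) : 6 < 10 * t → TransitionHull B (10 * t - 9) → TransitionHull B t

lemma isOpen_transitionHull {B : Set ℝ} (hB : IsOpen B) : IsOpen {t | TransitionHull B t} := by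
  refine isOpen_iff_eventually.2 fun t ht => ?_
  change TransitionHull B t at ht
  change ∀ᶠ y in 𝓝 t, TransitionHull B y
  induction ht with
  | base t ht => exact (hB.eventually_mem ht).mono fun y hy => .base y hy
  | left t h1 _ ih =>
    have hc : Continuous fun t : ℝ => 10 * t := by fun_prop
    filter_upwards [hc.continuousAt.eventually ih, hc.continuousAt.eventually_lt_const h1] with y h h'
    exact .left y h' h
  | mid t h1 h2 _ ih =>
    have hc : Continuous fun t : ℝ => 10 * t := by fun_prop
    have hc' : Continuous fun t : ℝ => 4 - 10 * t := by fun_prop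
    filter_upwards [hc'.continuousAt.eventually ih, hc.continuousAt.eventually_const_lt h1,
      hc.continuousAt.eventually_lt_const h2] with y h h' h''
    exact .mid y h' h'' h
  | right t h1 _ ih =>
    have hc : Continuous fun t : ℝ => 10 * t := by fun_prop
    have hc' : Continuous fun t : ℝ => 10 * t - 9 := by fun_prop
    filter_upwards [hc'.continuousAt.eventually ih, hc.continuousAt.eventually_const_lt h1] with y h h'
    exact .right y h' h

lemma TransitionHull.le_one {t : ℝ} (h : TransitionHull (Iio 0) t) : t ≤ 1 := by
  induction h with
  | base t ht => exact (mem_Iio.1 ht).le.trans zero_le_one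
  | left | mid | right => linarith

lemma TransitionHull.nonneg {t : ℝ} (h : TransitionHull (Ioi 1) t) : 0 ≤ t := by
  induction h with
  | base t ht => exact zero_le_one.trans (mem_Ioi.1 ht).le
  | left | mid | right => linarith

lemma isTransition_transitionHull : IsTransition {t | TransitionHull (Iio 0) t} where
  mem_of_neg t ht := .base t ht
  notMem_of_one_lt t ht h := by have := h.le_one; linarith
  left t ht := by
    refine ⟨fun h => ?_, .left t ht⟩
    rcases h with _ | _ | _ | _
    · exact .base _ (mem_Iio.2 (by linarith [mem_Iio.1 ‹t ∈ Iio 0›]))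
    · assumption
    · have := TransitionHull.le_one ‹_›
      linarith
    · linarith
  mid t ht ht' := by
    refine ⟨fun h => ?_, .mid t ht ht'⟩
    rcases h with _ | _ | _ | _
    · have := mem_Iio.1 ‹t ∈ Iio 0›
      linarith
    · have := TransitionHull.le_one ‹_›
      linarith
    · assumption
    · exact .base _ (mem_Iio.2 (by linarith))
  right t ht := by
    refine ⟨fun h => ?_, .right t ht⟩
    rcases h with _ | _ | _ | _
    · have := mem_Iio.1 ‹t ∈ Iio 0›
      linarith
    · linarith
    · exact .base _ (mem_Iio.2 (by linarith))
    · assumption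

lemma isTransition_compl_transitionHull : IsTransition {t | TransitionHull (Ioi 1) t}ᶜ where
  mem_of_neg t ht h := by have := TransitionHull.nonneg h; linarith
  notMem_of_one_lt t ht h := h (.base t ht)
  left t ht := by
    refine not_congr ⟨fun h => ?_, .left t ht⟩
    rcases h with _ | _ | _ | _
    · exact .base _ (mem_Ioi.2 (by linarith [mem_Ioi.1 ‹t ∈ Ioi 1›]))
    · assumption
    · exact .base _ (mem_Ioi.2 (by linarith))
    · linarith
  mid t ht ht' := by
    refine not_congr ⟨fun h => ?_, .mid t ht ht'⟩
    rcases h with _ | _ | _ | _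
    · have := mem_Ioi.1 ‹t ∈ Ioi 1›
      linarith
    · exact .base _ (mem_Ioi.2 (by linarith))
    · assumption
    · have := TransitionHull.nonneg ‹_›
      linarith
  right t ht := by
    refine not_congr ⟨fun h => ?_, .right t ht⟩
    rcases h with _ | _ | _ | _
    · exact .base _ (mem_Ioi.2 (by linarith [mem_Ioi.1 ‹t ∈ Ioi 1›]))
    · linarith
    · have := TransitionHull.nonneg ‹_›
      linarith
    · assumption

/-- The expanding map whose inverse branches are the contractions of the transition
self-similarity. -/
noncomputable def transitionExpand (t : ℝ) : ℝ :=
  if 10 * t < 2 then 10 * t else if 10 * t < 7 then 4 - 10 * t else 10 * t - 9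

lemma densityRatio_eq_of_forall_mem_ball {S : Set ℝ} {c d t r : ℝ} (hc : |c| = 10)
    (h : ∀ y ∈ ball t (r / 10), y ∈ S ↔ c * y + d ∈ S) :
    (volume (S ∩ ball (c * t + d) r)).toReal / (volume (ball (c * t + d) r)).toReal =
      (volume (S ∩ ball t (r / 10))).toReal / (volume (ball t (r / 10))).toReal := by
  have hc0 : c ≠ 0 := abs_pos.1 (by rw [hc]; norm_num)
  have e : S ∩ ball t (r / 10) = (fun x => c * x + d) ⁻¹' S ∩ ball t (r / 10) := by
    ext y
    simp only [mem_inter_iff, and_congr_left_iff]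
    exact h y
  rw [e, densityRatio_affine_preimage hc0, hc, mul_div_cancel₀ r (by norm_num : (10 : ℝ) ≠ 0)]

namespace IsTransition

variable {S : Set ℝ} {t v : ℝ}

lemma mem_of_gap (hS : IsTransition S) (h1 : 4 < 10 * t) (h2 : 10 * t < 9) : t ∈ S := by
  rcases lt_or_ge (10 * t) 8 with h | h
  · exact (hS.mid t (by linarith) h).2 (hS.mem_of_neg _ (by linarith))
  · exact (hS.right t (by linarith)).2 (hS.mem_of_neg _ (by linarith))

lemma notMem_of_gap (hS : IsTransition S) (h1 : 1 < 10 * t) (h2 : 10 * t < 3) : t ∉ S :=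
  fun h => hS.notMem_of_one_lt _ h1 ((hS.left t h2).1 h)

lemma densityRatio_expand (hS : IsTransition S) (t : ℝ) {r : ℝ} (hr : r ≤ 1) :
    (volume (S ∩ ball (transitionExpand t) r)).toReal /
        (volume (ball (transitionExpand t) r)).toReal =
      (volume (S ∩ ball t (r / 10))).toReal / (volume (ball t (r / 10))).toReal := by
  unfold transitionExpand
  have hb (y) (hy : y ∈ ball t (r / 10)) : 10 * t - 1 < 10 * y ∧ 10 * y < 10 * t + 1 := by
    rw [mem_ball, Real.dist_eq, abs_lt] at hy
    constructor <;> linarith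
  split_ifs with h1 h2
  · rw [← add_zero (10 * t)]
    refine densityRatio_eq_of_forall_mem_ball (by norm_num) fun y hy => ?_
    rw [add_zero]
    exact hS.left y (by linarith [hb y hy])
  · rw [show 4 - 10 * t = -10 * t + 4 by ring]
    refine densityRatio_eq_of_forall_mem_ball (by norm_num) fun y hy => ?_
    rw [show -10 * y + 4 = 4 - 10 * y by ring]
    exact hS.mid y (by linarith [hb y hy]) (by linarith [hb y hy])
  · rw [sub_eq_add_neg]
    refine densityRatio_eq_of_forall_mem_ball (by norm_num) fun y hy => ?_
    rw [← sub_eq_add_neg]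
    exact hS.right y (by linarith [hb y hy])

lemma densityRatio_iterate (hS : IsTransition S) (t : ℝ) (n : ℕ) {r : ℝ} (h0 : 0 ≤ r)
    (hr : r ≤ 1) :
    (volume (S ∩ ball (transitionExpand^[n] t) r)).toReal /
        (volume (ball (transitionExpand^[n] t) r)).toReal =
      (volume (S ∩ ball t (r / 10 ^ n))).toReal / (volume (ball t (r / 10 ^ n))).toReal := by
  induction n generalizing r with
  | zero => simp
  | succ n ih =>
    rw [Function.iterate_succ_apply', hS.densityRatio_expand _ hr,
      ih (by positivity) (by linarith), div_div, pow_succ']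

lemma tendsto_volume_ball_iterate (hS : IsTransition S) (h : HasDensity S t v) {r : ℝ}
    (h0 : 0 < r) (hr : r ≤ 1) :
    Tendsto (fun n => (volume (S ∩ ball (transitionExpand^[n] t) r)).toReal) atTop
      (𝓝 (v * (2 * r))) := by
  have hpow : Tendsto (fun n : ℕ => r / (10 : ℝ) ^ n) atTop (𝓝[>] 0) := by
    refine tendsto_nhdsWithin_iff.2
      ⟨tendsto_const_nhds.div_atTop (tendsto_pow_atTop_atTop_of_one_lt (by norm_num)), ?_⟩
    exact Eventually.of_forall fun n => div_pos h0 (by positivity)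
  refine ((Tendsto.comp h hpow).mul_const (2 * r)).congr fun n => ?_
  have hvol (x : ℝ) : (volume (ball x r)).toReal = 2 * r := by
    rw [Real.volume_ball, ENNReal.toReal_ofReal (by positivity)]
  rw [Function.comp_apply, ← hS.densityRatio_iterate t n h0.le hr, hvol]
  field_simp

lemma tendsto_volume_annulus_iterate (hS : IsTransition S) (h : HasDensity S t v) {a b : ℝ}
    (h0 : 0 < a) (hab : a ≤ b) (hb : b ≤ 1) :
    Tendsto (fun n => (volume (S ∩ (ball (transitionExpand^[n] t) b \
      ball (transitionExpand^[n] t) a))).toReal) atTop (𝓝 (2 * (b - a) * v)) := by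
  simp_rw [volume_inter_annulus S _ hab]
  convert (hS.tendsto_volume_ball_iterate h (h0.trans_le hab) hb).sub
    (hS.tendsto_volume_ball_iterate h h0 (hab.trans hb)) using 2
  ring

lemma hasDensity_expand (hS : IsTransition S) (h : HasDensity S t v) :
    HasDensity S (transitionExpand t) v := by
  have h' : Tendsto (fun e : ℝ => e / 10) (𝓝[>] 0) (𝓝[>] 0) := by
    simpa only [div_eq_inv_mul] using tendsto_mul_nhdsGT_zero (c := (10 : ℝ)⁻¹) (by norm_num)
  refine (Tendsto.comp h h').congr' ?_
  filter_upwards [Ioo_mem_nhdsGT one_pos] with e he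
  exact (hS.densityRatio_expand t he.2.le).symm

lemma hasDensity_iterate (hS : IsTransition S) (h : HasDensity S t v) (n : ℕ) :
    HasDensity S (transitionExpand^[n] t) v := by
  induction n with
  | zero => exact h
  | succ n ih =>
    rw [Function.iterate_succ_apply']
    exact hS.hasDensity_expand ih

lemma noIntermediateDensityAt_of_notMem_Icc (hS : IsTransition S) (ht : t ∉ Icc (0 : ℝ) 1) :
    NoIntermediateDensityAt S t := by
  rcases lt_or_ge t 0 with h | h
  · exact noIntermediateDensityAt_of_eventually_mem
      ((eventually_lt_nhds h).mono hS.mem_of_neg)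
  · have h1 : 1 < t := not_le.1 fun h' => ht ⟨h, h'⟩
    exact noIntermediateDensityAt_of_eventually_notMem
      ((eventually_gt_nhds h1).mono hS.notMem_of_one_lt)

lemma volume_annulus (x : ℝ) {a b : ℝ} (h0 : 0 ≤ a) (hab : a ≤ b) :
    (volume (ball x b \ ball x a)).toReal = 2 * (b - a) := by
  have h := volume_inter_annulus univ x hab
  simp only [univ_inter, Real.volume_ball] at h
  rw [h, ENNReal.toReal_ofReal (by linarith), ENNReal.toReal_ofReal (by linarith)]
  ring

lemma mem_annulus_iff {x y a b : ℝ} :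
    y ∈ ball x b \ ball x a ↔ a ≤ |y - x| ∧ |y - x| < b := by
  simp [Real.dist_eq, and_comm]

lemma cases_of_expand_mem_Icc (h : transitionExpand t ∈ Icc (0 : ℝ) 1) :
    (10 * t ≤ 1) ∨ (3 ≤ 10 * t ∧ 10 * t ≤ 4) ∨ 9 ≤ 10 * t := by
  unfold transitionExpand at h
  obtain ⟨h0, h1⟩ := h
  split_ifs at h0 h1
  · exact .inl h1
  · exact .inr (.inl ⟨by linarith, by linarith⟩)
  · exact .inr (.inr (by linarith))

lemma volume_annulus_left (hS : IsTransition S) (h0 : 0 ≤ t) (h1 : 10 * t ≤ 1) :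
    (volume (S ∩ (ball t 0.65 \ ball t 0.45))).toReal = 0.4 := by
  rw [inter_eq_self_of_subset_right, volume_annulus t (by norm_num) (by norm_num)]
  · norm_num
  intro y hy
  obtain ⟨ha, hb⟩ := mem_annulus_iff.1 hy
  rcases abs_cases (y - t) with h | h
  · exact hS.mem_of_gap (by linarith) (by linarith)
  · exact hS.mem_of_neg _ (by linarith)

lemma volume_annulus_mid (hS : IsTransition S) (h0 : 3 ≤ 10 * t) (h1 : 10 * t ≤ 4) :
    (volume (S ∩ (ball t 0.48 \ ball t 0.42))).toReal = 0.12 := by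
  rw [inter_eq_self_of_subset_right, volume_annulus t (by norm_num) (by norm_num)]
  · norm_num
  intro y hy
  obtain ⟨ha, hb⟩ := mem_annulus_iff.1 hy
  rcases abs_cases (y - t) with h | h
  · exact hS.mem_of_gap (by linarith) (by linarith)
  · exact hS.mem_of_neg _ (by linarith)

lemma volume_annulus_right (hS : IsTransition S) (h0 : 9 ≤ 10 * t) (h1 : t ≤ 1) :
    (volume (S ∩ (ball t 0.78 \ ball t 0.72))).toReal = 0 := by
  suffices S ∩ (ball t 0.78 \ ball t 0.72) = ∅ by simp [this]
  refine eq_empty_of_forall_notMem fun y ⟨hyS, hy⟩ => ?_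
  obtain ⟨ha, hb⟩ := mem_annulus_iff.1 hy
  rcases abs_cases (y - t) with h | h
  · exact hS.notMem_of_one_lt _ (by linarith) hyS
  · exact hS.notMem_of_gap (by linarith) (by linarith) hyS

/-- At a point whose whole expanding orbit stays in `[0, 1]`, infinitely many comparable annuli are
entirely inside or entirely outside the set; at every other point the set is locally trivial. -/
lemma noIntermediateDensityAt (hS : IsTransition S) (t : ℝ) : NoIntermediateDensityAt S t := by
  intro v hv0 hv1 hv
  have horb (n : ℕ) : transitionExpand^[n] t ∈ Icc (0 : ℝ) 1 := by
    by_contra h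
    exact hS.noIntermediateDensityAt_of_notMem_Icc h v hv0 hv1 (hS.hasDensity_iterate hv n)
  have hl := (hS.tendsto_volume_annulus_iterate hv (a := 0.45) (b := 0.65) (by norm_num)
    (by norm_num) (by norm_num)).eventually_lt_const (u := 0.4) (by norm_num; linarith)
  have hm := (hS.tendsto_volume_annulus_iterate hv (a := 0.42) (b := 0.48) (by norm_num)
    (by norm_num) (by norm_num)).eventually_lt_const (u := 0.12) (by norm_num; linarith)
  have hr := (hS.tendsto_volume_annulus_iterate hv (a := 0.72) (b := 0.78) (by norm_num)
    (by norm_num) (by norm_num)).eventually_const_lt (u := 0) (by norm_num; linarith)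
  obtain ⟨n, hl, hm, hr⟩ := (hl.and (hm.and hr)).exists
  have hn := horb (n + 1)
  rw [Function.iterate_succ_apply'] at hn
  rcases cases_of_expand_mem_Icc hn with h | ⟨h, h'⟩ | h
  · exact hl.ne (hS.volume_annulus_left (horb n).1 h)
  · exact hm.ne (hS.volume_annulus_mid h h')
  · exact hr.ne' (hS.volume_annulus_right h (horb n).2)

lemma not_hasDensity_of_fixed (hS : IsTransition S) (hfix : transitionExpand t = t)
    (hl : ∀ y ∈ Ioc (t - 0.28) (t - 0.12), y ∈ S) (hr : ∀ y ∈ Ico (t + 0.12) (t + 0.28), y ∉ S) :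
    ¬ ∃ v, HasDensity S t v := by
  rintro ⟨v, hv⟩
  have h := hS.tendsto_volume_annulus_iterate hv (a := 0.12) (b := 0.28) (by norm_num)
    (by norm_num) (by norm_num)
  simp_rw [Function.iterate_fixed hfix] at h
  have hset : S ∩ (ball t 0.28 \ ball t 0.12) = Ioc (t - 0.28) (t - 0.12) := by
    ext y
    rw [mem_inter_iff, mem_annulus_iff]
    refine ⟨fun ⟨hyS, ha, hb⟩ => ?_, fun hy => ⟨hl y hy, ?_⟩⟩
    · rcases abs_cases (y - t) with h | h
      · exact absurd hyS (hr y ⟨by linarith, by linarith⟩)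
      · exact ⟨by linarith, by linarith⟩
    · rw [abs_of_neg (by linarith [hy.2])]
      exact ⟨by linarith [hy.2], by linarith [hy.1]⟩
  rw [hset, Real.volume_Ioc, ENNReal.toReal_ofReal (by linarith)] at h
  have hv' := tendsto_nhds_unique h tendsto_const_nhds
  exact hS.noIntermediateDensityAt t v (by linarith) (by linarith) hv

lemma not_hasDensity_zero (hS : IsTransition S) : ¬ ∃ v, HasDensity S 0 v := by
  refine hS.not_hasDensity_of_fixed (by simp [transitionExpand]) (fun y hy => ?_) fun y hy => ?_
  · exact hS.mem_of_neg y (by linarith [hy.2])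
  · exact hS.notMem_of_gap (by linarith [hy.1]) (by linarith [hy.2])

lemma not_hasDensity_one (hS : IsTransition S) : ¬ ∃ v, HasDensity S 1 v := by
  refine hS.not_hasDensity_of_fixed (by norm_num [transitionExpand]) (fun y hy => ?_) fun y hy => ?_
  · exact hS.mem_of_gap (by linarith [hy.1]) (by linarith [hy.2])
  · exact hS.notMem_of_one_lt y (by linarith [hy.1])

end IsTransition

/-- The set obtained by pasting a reversed copy of `S` on `[a, a + w]`, the interval
`(a + w, b - w)`, and a copy of `S` on `[b - w, b]`. -/
def transitionBlock (S : Set ℝ) (w a b : ℝ) : Set ℝ :=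
  (fun x => -w⁻¹ * x + (a / w + 1)) ⁻¹' S ∩ (fun x => w⁻¹ * x + (1 - b / w)) ⁻¹' S

namespace IsTransition

variable {S : Set ℝ} {w a b x : ℝ}

lemma mem_left_of_lt (hS : IsTransition S) (hw : 0 < w) (hx : a + w < x) :
    -w⁻¹ * x + (a / w + 1) ∈ S := by
  refine hS.mem_of_neg _ ?_
  rw [show -w⁻¹ * x + (a / w + 1) = (a + w - x) / w by field_simp; ring]
  exact div_neg_of_neg_of_pos (by linarith) hw

lemma mem_right_of_lt (hS : IsTransition S) (hw : 0 < w) (hx : x < b - w) :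
    w⁻¹ * x + (1 - b / w) ∈ S := by
  refine hS.mem_of_neg _ ?_
  rw [show w⁻¹ * x + (1 - b / w) = (x + w - b) / w by field_simp; ring]
  exact div_neg_of_neg_of_pos (by linarith) hw

lemma transitionBlock_subset (hS : IsTransition S) (hw : 0 < w) :
    transitionBlock S w a b ⊆ Icc a b := by
  rintro x ⟨hl, hr⟩
  constructor
  · by_contra! h
    refine hS.notMem_of_one_lt _ ?_ hl
    beta_reduce
    rw [show -w⁻¹ * x + (a / w + 1) = 1 + (a - x) / w by field_simp; ring]
    linarith [div_pos (sub_pos.2 h) hw]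
  · by_contra! h
    refine hS.notMem_of_one_lt _ ?_ hr
    beta_reduce
    rw [show w⁻¹ * x + (1 - b / w) = 1 + (x - b) / w by field_simp; ring]
    linarith [div_pos (sub_pos.2 h) hw]

lemma transitionBlock_eventually_left (hS : IsTransition S) (hw : 0 < w) (hx : x < b - w) :
    ∀ᶠ y in 𝓝 x, y ∈ transitionBlock S w a b ↔ y ∈ (fun x => -w⁻¹ * x + (a / w + 1)) ⁻¹' S :=
  (eventually_lt_nhds hx).mono fun _ hy => and_iff_left (hS.mem_right_of_lt hw hy)

lemma transitionBlock_eventually_right (hS : IsTransition S) (hw : 0 < w) (hx : a + w < x) :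
    ∀ᶠ y in 𝓝 x, y ∈ transitionBlock S w a b ↔ y ∈ (fun x => w⁻¹ * x + (1 - b / w)) ⁻¹' S :=
  (eventually_gt_nhds hx).mono fun _ hy => and_iff_right (hS.mem_left_of_lt hw hy)

lemma transitionBlock_noIntermediateDensityAt (hS : IsTransition S) (hw : 0 < w)
    (hab : 2 * w < b - a) (x : ℝ) : NoIntermediateDensityAt (transitionBlock S w a b) x := by
  have hw' : w⁻¹ ≠ 0 := inv_ne_zero hw.ne'
  rcases lt_or_ge x (b - w) with h | h
  · exact ((hS.noIntermediateDensityAt _).affine_preimage (neg_ne_zero.2 hw') _).congr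
      (hS.transitionBlock_eventually_left hw h)
  · exact ((hS.noIntermediateDensityAt _).affine_preimage hw' _).congr
      (hS.transitionBlock_eventually_right hw (by linarith))

lemma transitionBlock_not_hasDensity_left (hS : IsTransition S) (hw : 0 < w)
    (hab : 2 * w < b - a) : ¬ ∃ v, HasDensity (transitionBlock S w a b) a v := by
  rintro ⟨v, hv⟩
  have h := (hasDensity_affine_preimage (neg_ne_zero.2 (inv_ne_zero hw.ne')) _).1
    (hv.congr (hS.transitionBlock_eventually_left hw (by linarith)))
  rw [show -w⁻¹ * a + (a / w + 1) = 1 by field_simp; ring] at h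
  exact hS.not_hasDensity_one ⟨v, h⟩

lemma transitionBlock_not_hasDensity_right (hS : IsTransition S) (hw : 0 < w)
    (hab : 2 * w < b - a) : ¬ ∃ v, HasDensity (transitionBlock S w a b) b v := by
  rintro ⟨v, hv⟩
  have h := (hasDensity_affine_preimage (inv_ne_zero hw.ne') _).1
    (hv.congr (hS.transitionBlock_eventually_right hw (by linarith)))
  rw [show w⁻¹ * b + (1 - b / w) = 1 by field_simp; ring] at h
  exact hS.not_hasDensity_one ⟨v, h⟩

lemma volume_inter_Ici_le (hS : IsTransition S) : volume (S ∩ Ici 0) ≤ 1 := by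
  have : S ∩ Ici 0 ⊆ Icc 0 1 := fun x hx => ⟨hx.2, not_lt.1 fun h => hS.notMem_of_one_lt x h hx.1⟩
  simpa using measure_mono (μ := volume) this

lemma volume_transitionBlock (hS : IsTransition S) (hm : MeasurableSet S) (hw : 0 < w)
    (hab : 2 * w < b - a) :
    volume (transitionBlock S w a b) =
      ENNReal.ofReal (b - a - 2 * w * (1 - (volume (S ∩ Ici 0)).toReal)) := by
  set p := (volume (S ∩ Ici 0)).toReal with hp
  have hp0 : 0 ≤ p := ENNReal.toReal_nonneg
  have hpS : volume (S ∩ Ici 0) = ENNReal.ofReal p :=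
    (ENNReal.ofReal_toReal (hS.volume_inter_Ici_le.trans_lt ENNReal.one_lt_top).ne).symm
  have hw' : w⁻¹ ≠ 0 := inv_ne_zero hw.ne'
  set L := (fun x => -w⁻¹ * x + (a / w + 1)) ⁻¹' (S ∩ Ici 0) with hL
  set R := (fun x => w⁻¹ * x + (1 - b / w)) ⁻¹' (S ∩ Ici 0) with hR
  have memL (x : ℝ) : -w⁻¹ * x + (a / w + 1) ∈ Ici (0 : ℝ) ↔ x ≤ a + w := by
    rw [mem_Ici, show -w⁻¹ * x + (a / w + 1) = (a + w - x) / w by field_simp; ring,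
      le_div_iff₀ hw, zero_mul, sub_nonneg]
  have memR (x : ℝ) : w⁻¹ * x + (1 - b / w) ∈ Ici (0 : ℝ) ↔ b - w ≤ x := by
    rw [mem_Ici, show w⁻¹ * x + (1 - b / w) = (x - (b - w)) / w by field_simp; ring,
      le_div_iff₀ hw, zero_mul, sub_nonneg]
  have hunion : transitionBlock S w a b = L ∪ Ioo (a + w) (b - w) ∪ R := by
    ext x
    constructor
    · rintro ⟨h1, h2⟩
      rcases le_or_gt x (a + w) with h | h
      · exact .inl (.inl ⟨h1, (memL x).2 h⟩)
      rcases le_or_gt (b - w) x with h' | h'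
      · exact .inr ⟨h2, (memR x).2 h'⟩
      · exact .inl (.inr ⟨h, h'⟩)
    · rintro ((⟨h1, h2⟩ | ⟨h1, h2⟩) | ⟨h1, h2⟩)
      · exact ⟨h1, hS.mem_right_of_lt hw (by linarith [(memL x).1 h2])⟩
      · exact ⟨hS.mem_left_of_lt hw h1, hS.mem_right_of_lt hw h2⟩
      · exact ⟨hS.mem_left_of_lt hw (by linarith [(memR x).1 h2]), h1⟩
  have hRm : MeasurableSet R := (hm.inter measurableSet_Ici).preimage (by fun_prop)
  have hdisj : Disjoint (L ∪ Ioo (a + w) (b - w)) R := by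
    refine disjoint_left.2 ?_
    rintro x (⟨_, h⟩ | ⟨_, h⟩) ⟨_, h'⟩
    · linarith [(memL x).1 h, (memR x).1 h']
    · linarith [(memR x).1 h']
  have hdisj' : Disjoint L (Ioo (a + w) (b - w)) := by
    refine disjoint_left.2 ?_
    rintro x ⟨_, h⟩ ⟨h', _⟩
    linarith [(memL x).1 h]
  rw [hunion, measure_union hdisj hRm, measure_union hdisj' measurableSet_Ioo, hL, hR,
    volume_affine_preimage (neg_ne_zero.2 hw'), volume_affine_preimage hw', hpS, Real.volume_Ioo,
    inv_neg, abs_neg, inv_inv, abs_of_pos hw, ← ENNReal.ofReal_mul hw.le,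
    ← ENNReal.ofReal_add (by positivity) (by linarith),
    ← ENNReal.ofReal_add (add_nonneg (by positivity) (by linarith)) (by positivity)]
  congr 1
  ring

lemma measurableSet_transitionBlock (hm : MeasurableSet S) :
    MeasurableSet (transitionBlock S w a b) :=
  (hm.preimage (by fun_prop)).inter (hm.preimage (by fun_prop))

end IsTransition

/-- A set of measure `m` in `[0, 1]` without intermediate densities and without density at `0`
and at `1`. -/
structure IsFilling (m : ℝ) (X : Set ℝ) : Prop where
  subset : X ⊆ Icc 0 1
  measurableSet : MeasurableSet X
  noIntermediateDensityAt : ∀ x, NoIntermediateDensityAt X x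
  not_hasDensity_zero : ¬ ∃ v, HasDensity X 0 v
  not_hasDensity_one : ¬ ∃ v, HasDensity X 1 v
  volume_eq : volume X = ENNReal.ofReal m

lemma IsTransition.exists_isFilling {S : Set ℝ} (hS : IsTransition S) (hm : MeasurableSet S)
    {m : ℝ} (hm0 : 0 < m) (hm1 : m < 1) :
    ∃ X, IsFilling m X ∧ (IsOpen S → IsOpen X) ∧ (IsClosed S → IsClosed X) := by
  set p := (volume (S ∩ Ici 0)).toReal with hp
  have hp0 : 0 ≤ p := ENNReal.toReal_nonneg
  have hp1 : p ≤ 1 := ENNReal.toReal_le_of_le_ofReal zero_le_one (by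
    simpa using hS.volume_inter_Ici_le)
  obtain ⟨w, hw, hwm, hwm'⟩ : ∃ w : ℝ, 0 < w ∧ 4 * w < m ∧ 4 * w < 1 - m :=
    ⟨min m (1 - m) / 8, by have := lt_min hm0 (sub_pos.2 hm1); positivity,
      by linarith [min_le_left m (1 - m)], by linarith [min_le_right m (1 - m)]⟩
  set l := m / 2 + 2 * w * (1 - p) with hl
  have hwp : 0 ≤ w * (1 - p) := mul_nonneg hw.le (by linarith)
  have hwp' : 0 ≤ w * p := mul_nonneg hw.le hp0
  have hl2 : 2 * w < l := by linarith
  have hl1 : l < 1 / 2 := by linarith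
  have hab : 2 * w < l - 0 := by linarith
  have hab' : 2 * w < 1 - (1 - l) := by linarith
  have hA : transitionBlock S w 0 l ⊆ Icc 0 l := hS.transitionBlock_subset hw
  have hB : transitionBlock S w (1 - l) 1 ⊆ Icc (1 - l) 1 := hS.transitionBlock_subset hw
  have hnearA {x : ℝ} (hx : x < 1 - l) : ∀ᶠ y in 𝓝 x,
      y ∈ transitionBlock S w 0 l ∪ transitionBlock S w (1 - l) 1 ↔ y ∈ transitionBlock S w 0 l :=
    (eventually_lt_nhds hx).mono fun y hy => or_iff_left fun h => hy.not_ge (hB h).1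
  have hnearB {x : ℝ} (hx : l < x) : ∀ᶠ y in 𝓝 x,
      y ∈ transitionBlock S w 0 l ∪ transitionBlock S w (1 - l) 1 ↔
        y ∈ transitionBlock S w (1 - l) 1 :=
    (eventually_gt_nhds hx).mono fun y hy => or_iff_right fun h => hy.not_ge (hA h).2
  refine ⟨transitionBlock S w 0 l ∪ transitionBlock S w (1 - l) 1, ⟨?_, ?_, fun x => ?_, ?_, ?_, ?_⟩,
    fun h => ?_, fun h => ?_⟩
  · exact union_subset (hA.trans (Icc_subset_Icc le_rfl (by linarith)))
      (hB.trans (Icc_subset_Icc (by linarith) le_rfl))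
  · exact (measurableSet_transitionBlock hm).union (measurableSet_transitionBlock hm)
  · rcases lt_or_ge x (1 - l) with h | h
    · exact (hS.transitionBlock_noIntermediateDensityAt hw hab x).congr (hnearA h)
    · exact (hS.transitionBlock_noIntermediateDensityAt hw hab' x).congr (hnearB (by linarith))
  · rintro ⟨v, hv⟩
    exact hS.transitionBlock_not_hasDensity_left hw hab ⟨v, hv.congr (hnearA (by linarith))⟩
  · rintro ⟨v, hv⟩
    exact hS.transitionBlock_not_hasDensity_right hw hab' ⟨v, hv.congr (hnearB (by linarith))⟩
  · have hdisj : Disjoint (transitionBlock S w 0 l) (transitionBlock S w (1 - l) 1) :=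
      disjoint_left.2 fun x h h' => by linarith [(hA h).2, (hB h').1]
    rw [measure_union hdisj (measurableSet_transitionBlock hm),
      hS.volume_transitionBlock hm hw hab, hS.volume_transitionBlock hm hw hab', ← hp,
      ← ENNReal.ofReal_add (by linarith) (by linarith)]
    congr 1
    rw [hl]
    ring
  · exact ((h.preimage (by fun_prop)).inter (h.preimage (by fun_prop))).union
      ((h.preimage (by fun_prop)).inter (h.preimage (by fun_prop)))
  · exact ((h.preimage (by fun_prop)).inter (h.preimage (by fun_prop))).union
      ((h.preimage (by fun_prop)).inter (h.preimage (by fun_prop)))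

lemma exists_isOpen_isFilling {m : ℝ} (hm0 : 0 < m) (hm1 : m < 1) :
    ∃ X, IsOpen X ∧ IsFilling m X := by
  have ho := isOpen_transitionHull (isOpen_Iio (a := (0 : ℝ)))
  obtain ⟨X, hX, h, -⟩ := isTransition_transitionHull.exists_isFilling ho.measurableSet hm0 hm1
  exact ⟨X, h ho, hX⟩

lemma exists_isClosed_isFilling {m : ℝ} (hm0 : 0 < m) (hm1 : m < 1) :
    ∃ X, IsClosed X ∧ IsFilling m X := by
  have hc := (isOpen_transitionHull (isOpen_Ioi (a := (1 : ℝ)))).isClosed_compl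
  obtain ⟨X, hX, -, h⟩ :=
    isTransition_compl_transitionHull.exists_isFilling hc.measurableSet hm0 hm1
  exact ⟨X, h hc, hX⟩

lemma sInf_eq_zero_of_forall_exists_lt {X : Set ℝ} (hX : X ⊆ Icc 0 1)
    (h : ∀ ε > 0, ∃ x ∈ X, x < ε) : sInf X = 0 := by
  obtain ⟨x, hx, -⟩ := h 1 one_pos
  exact csInf_eq_of_forall_ge_of_forall_gt_exists_lt ⟨x, hx⟩ (fun y hy => (hX hy).1) h

lemma sSup_eq_one_of_forall_exists_lt {X : Set ℝ} (hX : X ⊆ Icc 0 1)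
    (h : ∀ ε > 0, ∃ x ∈ X, 1 - ε < x) : sSup X = 1 := by
  obtain ⟨x, hx, -⟩ := h 1 one_pos
  refine csSup_eq_of_forall_le_of_forall_lt_exists_gt ⟨x, hx⟩ (fun y hy => (hX hy).2) fun w hw => ?_
  obtain ⟨y, hy, h'⟩ := h (1 - w) (sub_pos.2 hw)
  exact ⟨y, hy, by linarith⟩

namespace IsFilling

variable {m : ℝ} {X : Set ℝ}

lemma exists_lt (hX : IsFilling m X) {ε : ℝ} (hε : 0 < ε) : ∃ x ∈ X, x < ε := by
  by_contra! h
  exact hX.not_hasDensity_zero ⟨0, hasDensity_zero_of_eventually_notMem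
    ((eventually_lt_nhds hε).mono fun y hy hyX => hy.not_ge (h y hyX))⟩

lemma exists_gt (hX : IsFilling m X) {ε : ℝ} (hε : 0 < ε) : ∃ x ∈ X, 1 - ε < x := by
  by_contra! h
  exact hX.not_hasDensity_one ⟨0, hasDensity_zero_of_eventually_notMem
    ((eventually_gt_nhds (sub_lt_self 1 hε)).mono fun y hy hyX => hy.not_ge (h y hyX))⟩

lemma goodSpongy (hX : IsFilling m X) : GoodSpongy m X :=
  ⟨hX.subset, hX.measurableSet, ⟨hX.noIntermediateDensityAt, 0, hX.not_hasDensity_zero⟩,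
    sInf_eq_zero_of_forall_exists_lt hX.subset fun _ => hX.exists_lt,
    sSup_eq_one_of_forall_exists_lt hX.subset fun _ => hX.exists_gt, hX.volume_eq⟩

end IsFilling

/-- The image of `X` under the increasing affine map sending `[0, 1]` to `[a, b]`. -/
def rescale (X : Set ℝ) (a b : ℝ) : Set ℝ :=
  (fun x => (b - a)⁻¹ * x + -(a / (b - a))) ⁻¹' X

namespace IsFilling

variable {m a b : ℝ} {X : Set ℝ}

lemma rescale_subset (hX : IsFilling m X) (hab : a < b) : rescale X a b ⊆ Icc a b := by
  intro x hx
  have h := hX.subset hx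
  have hba := sub_pos.2 hab
  have e : (b - a)⁻¹ * x + -(a / (b - a)) = (x - a) / (b - a) := by ring
  beta_reduce at h
  rw [e, mem_Icc, le_div_iff₀ hba, div_le_iff₀ hba] at h
  exact ⟨by linarith [h.1], by linarith [h.2]⟩

lemma rescale_noIntermediateDensityAt (hX : IsFilling m X) (hab : a < b) (x : ℝ) :
    NoIntermediateDensityAt (rescale X a b) x :=
  (hX.noIntermediateDensityAt _).affine_preimage (inv_ne_zero (sub_pos.2 hab).ne') _

lemma rescale_not_hasDensity (hX : IsFilling m X) (hab : a < b) :
    ¬ ∃ v, HasDensity (rescale X a b) a v := by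
  rintro ⟨v, hv⟩
  have h := (hasDensity_affine_preimage (inv_ne_zero (sub_pos.2 hab).ne') _).1 hv
  rw [show (b - a)⁻¹ * a + -(a / (b - a)) = 0 by ring] at h
  exact hX.not_hasDensity_zero ⟨v, h⟩

lemma volume_rescale (hX : IsFilling m X) (hab : a < b) :
    volume (rescale X a b) = ENNReal.ofReal ((b - a) * m) := by
  have hba := sub_pos.2 hab
  rw [rescale, volume_affine_preimage (inv_ne_zero hba.ne'), hX.volume_eq, inv_inv,
    abs_of_pos hba, ENNReal.ofReal_mul hba.le]

lemma rescale_nonempty (hX : IsFilling m X) (hab : a < b) : (rescale X a b).Nonempty := by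
  rw [nonempty_iff_ne_empty]
  intro h
  exact hX.rescale_not_hasDensity hab ⟨0, h ▸ hasDensity_empty a⟩

end IsFilling

lemma IsOpen.rescale {X : Set ℝ} (hX : IsOpen X) (a b : ℝ) : IsOpen (rescale X a b) :=
  hX.preimage (by fun_prop)

lemma IsClosed.rescale {X : Set ℝ} (hX : IsClosed X) (a b : ℝ) : IsClosed (rescale X a b) :=
  hX.preimage (by fun_prop)

lemma hasDensity_zero_of_volume_le {A : Set ℝ}
    (h : ∀ e > 0, volume (A ∩ ball 0 e) ≤ ENNReal.ofReal (e ^ 2)) : HasDensity A 0 0 := by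
  have hlim : Tendsto (fun e : ℝ => e) (𝓝[>] 0) (𝓝 0) := tendsto_id.mono_left nhdsWithin_le_nhds
  refine tendsto_of_tendsto_of_tendsto_of_le_of_le' tendsto_const_nhds hlim
    (Eventually.of_forall fun e => by positivity) ?_
  filter_upwards [self_mem_nhdsWithin] with e he
  have he' : (0 : ℝ) < e := he
  rw [Real.volume_ball, ENNReal.toReal_ofReal (by positivity), div_le_iff₀ (by positivity)]
  have := ENNReal.toReal_le_of_le_ofReal (by positivity) (h e he')
  nlinarith

/-- Tiny blocks accumulating at `0` form an open set of density `0` there. -/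
lemma exists_isOpen_accumulating :
    ∃ B : Set ℝ, IsOpen B ∧ B ⊆ Ioo 0 (3 / 4) ∧ (∀ x, NoIntermediateDensityAt B x) ∧
      HasDensity B 0 0 ∧ ∀ ε > 0, ∃ x ∈ B, x < ε := by
  obtain ⟨D, hDo, hD⟩ := exists_isOpen_isFilling (m := 1 / 2) (by norm_num) (by norm_num)
  set h : ℕ → ℝ := fun n => (1 / 2) ^ (n + 1) with hh
  have hpos (n : ℕ) : 0 < h n := by positivity
  have hhalf (n : ℕ) : h n ≤ 1 / 2 :=
    (pow_le_pow_of_le_one (by norm_num) (by norm_num) (Nat.le_add_left 1 n)).trans_eq (pow_one _)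
  have hcube (n : ℕ) : h n ^ 3 ≤ h n / 4 := by
    have h2 : h n ^ 2 ≤ 1 / 4 := by nlinarith [hpos n, hhalf n]
    nlinarith [hpos n]
  have hstep {k n : ℕ} (hkn : k < n) : 2 * h n ≤ h k := by
    have : h n ≤ h (k + 1) := pow_le_pow_of_le_one (by norm_num) (by norm_num) (by omega)
    have h2 : h (k + 1) = h k / 2 := by simp only [hh, pow_succ]; ring
    linarith
  set b : ℕ → Set ℝ := fun n => rescale D (h n) (h n + h n ^ 3) with hb
  have hlt (n : ℕ) : h n < h n + h n ^ 3 := lt_add_of_pos_right _ (pow_pos (hpos n) 3)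
  have hsub (n : ℕ) : b n ⊆ Icc (h n) (h n + h n ^ 3) := hD.rescale_subset (hlt n)
  have hB : (⋃ n, b n) ⊆ Ioo 0 (3 / 4) := by
    refine iUnion_subset fun n x hx => ?_
    obtain ⟨h1, h2⟩ := hsub n hx
    exact ⟨(hpos n).trans_le h1, by linarith [hcube n, hhalf n]⟩
  have hdens : HasDensity (⋃ n, b n) 0 0 := by
    refine hasDensity_zero_of_volume_le fun e he => ?_
    have hterm (n : ℕ) : volume (b n ∩ ball 0 e) ≤ ENNReal.ofReal (e ^ 2) * 2⁻¹ ^ (n + 1) := by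
      rcases lt_or_ge (h n) e with hne | hne
      · have hr : (2⁻¹ : ENNReal) ^ (n + 1) = ENNReal.ofReal (h n) := by
          rw [hh, ENNReal.ofReal_pow (by norm_num), one_div, ENNReal.ofReal_inv_of_pos two_pos]
          simp
        rw [hr, ← ENNReal.ofReal_mul (by positivity)]
        refine (measure_mono inter_subset_left).trans ((measure_mono (hsub n)).trans ?_)
        rw [Real.volume_Icc]
        refine ENNReal.ofReal_le_ofReal ?_
        have h2 : h n ^ 2 ≤ e ^ 2 := pow_le_pow_left₀ (hpos n).le hne.le 2
        nlinarith [hpos n]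
      · have : b n ∩ ball 0 e = ∅ := by
          refine eq_empty_of_forall_notMem fun y ⟨hy, hye⟩ => ?_
          rw [mem_ball, Real.dist_eq, sub_zero] at hye
          linarith [(hsub n hy).1, le_abs_self y]
        simp [this]
    calc volume ((⋃ n, b n) ∩ ball 0 e) ≤ ∑' n, volume (b n ∩ ball 0 e) := by
          rw [iUnion_inter]
          exact measure_iUnion_le _
      _ ≤ ∑' n, ENNReal.ofReal (e ^ 2) * 2⁻¹ ^ (n + 1) := ENNReal.tsum_le_tsum hterm
      _ = ENNReal.ofReal (e ^ 2) := by
          rw [ENNReal.tsum_mul_left, ENNReal.tsum_geometric_add_one, ENNReal.one_sub_inv_two,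
            inv_inv, ENNReal.inv_mul_cancel two_ne_zero ENNReal.ofNat_ne_top, mul_one]
  refine ⟨⋃ n, b n, isOpen_iUnion fun n => hDo.rescale _ _, hB, fun x => ?_, hdens, ?_⟩
  · rcases lt_trichotomy x 0 with hx | rfl | hx
    · exact noIntermediateDensityAt_of_eventually_notMem
        ((eventually_lt_nhds hx).mono fun y hy hyB => hy.not_gt (hB hyB).1)
    · exact noIntermediateDensityAt_of_hasDensity_zero hdens
    rcases le_or_gt x (3 / 4) with hx1 | hx1
    · obtain ⟨n, hn, hn'⟩ := exists_nat_pow_near_of_lt_one (x := 4 / 3 * x) (by positivity)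
        (by linarith) (by norm_num : (0 : ℝ) < 1 / 2) (by norm_num)
      have hhn : h n = (1 / 2) ^ n / 2 := by simp only [hh, pow_succ]; ring
      have hn1 : 5 / 8 * h n < x := by linarith [hpos n]
      have hn2 : x < 2 * h n := by linarith [hpos n]
      refine (hD.rescale_noIntermediateDensityAt (hlt n) x).congr ?_
      filter_upwards [eventually_gt_nhds hn1, eventually_lt_nhds hn2] with y hy1 hy2
      refine ⟨fun hy => ?_, fun hy => mem_iUnion.2 ⟨n, hy⟩⟩
      obtain ⟨k, hk⟩ := mem_iUnion.1 hy
      obtain ⟨hk1, hk2⟩ := hsub k hk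
      rcases lt_trichotomy k n with hkn | rfl | hkn
      · linarith [hstep hkn]
      · exact hk
      · linarith [hstep hkn, hcube k]
    · exact noIntermediateDensityAt_of_eventually_notMem
        ((eventually_gt_nhds hx1).mono fun y hy hyB =>
          hy.not_gt (hB hyB).2)
  · intro ε hε
    obtain ⟨n, hn⟩ := exists_pow_lt_of_lt_one (half_pos hε) (by norm_num : (1 / 2 : ℝ) < 1)
    obtain ⟨x, hx⟩ := hD.rescale_nonempty (hlt n)
    refine ⟨x, mem_iUnion.2 ⟨n, hx⟩, ?_⟩
    have hhn : h n = (1 / 2) ^ n / 2 := by simp only [hh, pow_succ]; ring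
    linarith [(hsub n hx).2, hcube n, hpos n]

lemma exists_isClosed_goodSpongy_hasDensity {m : ℝ} (hm0 : 0 < m) (hm1 : m < 1) :
    ∃ X : Set ℝ, IsClosed X ∧ GoodSpongy m X ∧
      (∃ v : ℝ, HasDensity X 0 v) ∧ (∃ v : ℝ, HasDensity X 1 v) := by
  obtain ⟨s, hs0, hsm⟩ : ∃ s : ℝ, 0 < s ∧ 4 * s = 1 - m := ⟨(1 - m) / 4, by linarith, by ring⟩
  have hs : s < 1 - s := by linarith
  have hlen : 0 < 1 - s - s := by linarith
  obtain ⟨D, hDc, hD⟩ := exists_isClosed_isFilling (m := m / (1 - s - s)) (by positivity)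
    ((div_lt_one hlen).2 (by linarith))
  set Y := rescale D s (1 - s) with hY
  have hYsub : Y ⊆ Icc s (1 - s) := hD.rescale_subset hs
  have hae : (Y ∪ {0, 1} : Set ℝ) =ᵐ[volume] Y :=
    union_ae_eq_left_of_ae_eq_empty (ae_eq_empty.2 ((Set.toFinite _).measure_zero _))
  have hsub : Y ∪ {0, 1} ⊆ Icc 0 1 := by
    refine union_subset (hYsub.trans (Icc_subset_Icc hs0.le (by linarith))) ?_
    rintro x (rfl | rfl) <;> simp
  refine ⟨Y ∪ {0, 1}, (hDc.rescale _ _).union (Set.toFinite _).isClosed,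
    ⟨hsub, ((hDc.rescale _ _).union (Set.toFinite _).isClosed).measurableSet, ⟨?_, s, ?_⟩, ?_, ?_, ?_⟩,
    ⟨0, ?_⟩, ⟨0, ?_⟩⟩
  · intro x v h0 h1 hv
    exact hD.rescale_noIntermediateDensityAt hs x v h0 h1 ((hasDensity_congr_ae hae).1 hv)
  · rintro ⟨v, hv⟩
    exact hD.rescale_not_hasDensity hs ⟨v, (hasDensity_congr_ae hae).1 hv⟩
  · exact sInf_eq_zero_of_forall_exists_lt hsub fun ε hε => ⟨0, by simp, hε⟩
  · exact sSup_eq_one_of_forall_exists_lt hsub fun ε hε => ⟨1, by simp, by linarith⟩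
  · rw [measure_congr hae, hD.volume_rescale hs, mul_div_cancel₀ _ hlen.ne']
  · exact (hasDensity_congr_ae hae).2 (hasDensity_zero_of_eventually_notMem
      ((eventually_lt_nhds hs0).mono fun y hy h => hy.not_ge (hYsub h).1))
  · exact (hasDensity_congr_ae hae).2 (hasDensity_zero_of_eventually_notMem
      ((eventually_gt_nhds (sub_lt_self 1 hs0)).mono fun y hy h => hy.not_ge (hYsub h).2))

lemma exists_isOpen_goodSpongy_hasDensity {m : ℝ} (hm0 : 0 < m) (hm1 : m < 1) :
    ∃ X : Set ℝ, IsOpen X ∧ GoodSpongy m X ∧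
      (∃ v : ℝ, HasDensity X 0 v) ∧ (∃ v : ℝ, HasDensity X 1 v) := by
  obtain ⟨B, hBo, hB, hBn, hB0, hBε⟩ := exists_isOpen_accumulating
  obtain ⟨s, hs0, hsm, hsm'⟩ : ∃ s : ℝ, 0 < s ∧ 2 * s < m ∧ 2 * s < 1 - m :=
    ⟨min m (1 - m) / 4, by have := lt_min hm0 (sub_pos.2 hm1); positivity,
      by linarith [min_le_left m (1 - m), lt_min hm0 (sub_pos.2 hm1)],
      by linarith [min_le_right m (1 - m), lt_min hm0 (sub_pos.2 hm1)]⟩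
  have hs : s < 1 - s := by linarith
  have hlen : 0 < 1 - s - s := by linarith
  have hs' : s⁻¹ ≠ 0 := inv_ne_zero hs0.ne'
  have hvB : volume B ≤ 1 := by
    refine (measure_mono hB).trans ?_
    rw [Real.volume_Ioo, ENNReal.ofReal_le_one]
    norm_num
  set p := (volume B).toReal with hp
  have hpB : volume B = ENNReal.ofReal p :=
    (ENNReal.ofReal_toReal (hvB.trans_lt ENNReal.one_lt_top).ne).symm
  have hp0 : 0 ≤ p := ENNReal.toReal_nonneg
  have hp1 : p ≤ 1 := ENNReal.toReal_le_of_le_ofReal zero_le_one (by simpa using hvB)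
  have hsp : s * p ≤ s := mul_le_of_le_one_right hs0.le hp1
  have hsp0 : 0 ≤ s * p := by positivity
  obtain ⟨D, hDo, hD⟩ := exists_isOpen_isFilling (m := (m - 2 * (s * p)) / (1 - s - s))
    (div_pos (by linarith) hlen) ((div_lt_one hlen).2 (by linarith))
  set Y := rescale D s (1 - s) with hY
  set L := (fun x => s⁻¹ * x + 0) ⁻¹' B with hL
  set R := (fun x => -s⁻¹ * x + s⁻¹) ⁻¹' B with hR
  have hYsub : Y ⊆ Icc s (1 - s) := hD.rescale_subset hs
  have hLsub : L ⊆ Ioo 0 (3 / 4 * s) := by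
    intro x hx
    obtain ⟨h1, h2⟩ := hB hx
    beta_reduce at h1 h2
    rw [show s⁻¹ * x + 0 = x / s by ring] at h1 h2
    exact ⟨by simpa [hs0] using (lt_div_iff₀ hs0).1 h1, (div_lt_iff₀ hs0).1 h2⟩
  have hRsub : R ⊆ Ioo (1 - 3 / 4 * s) 1 := by
    intro x hx
    obtain ⟨h1, h2⟩ := hB hx
    beta_reduce at h1 h2
    rw [show -s⁻¹ * x + s⁻¹ = (1 - x) / s by ring] at h1 h2
    rw [lt_div_iff₀ hs0] at h1
    rw [div_lt_iff₀ hs0] at h2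
    exact ⟨by linarith, by linarith⟩
  have hnearL {x : ℝ} (hx : x < s) : ∀ᶠ y in 𝓝 x, y ∈ L ∪ Y ∪ R ↔ y ∈ L := by
    filter_upwards [eventually_lt_nhds hx] with y hy
    refine ⟨?_, fun h => .inl (.inl h)⟩
    rintro ((h | h) | h)
    · exact h
    · linarith [(hYsub h).1]
    · linarith [(hRsub h).1]
  have hnearY {x : ℝ} (hx : 3 / 4 * s < x) (hx' : x < 1 - 3 / 4 * s) :
      ∀ᶠ y in 𝓝 x, y ∈ L ∪ Y ∪ R ↔ y ∈ Y := by
    filter_upwards [eventually_gt_nhds hx, eventually_lt_nhds hx'] with y hy hy'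
    refine ⟨?_, fun h => .inl (.inr h)⟩
    rintro ((h | h) | h)
    · linarith [(hLsub h).2]
    · exact h
    · linarith [(hRsub h).1]
  have hnearR {x : ℝ} (hx : 1 - s < x) : ∀ᶠ y in 𝓝 x, y ∈ L ∪ Y ∪ R ↔ y ∈ R := by
    filter_upwards [eventually_gt_nhds hx] with y hy
    refine ⟨?_, fun h => .inr h⟩
    rintro ((h | h) | h)
    · linarith [(hLsub h).2]
    · linarith [(hYsub h).2]
    · exact h
  have hYo : IsOpen Y := hDo.rescale _ _
  have hRo : IsOpen R := hBo.preimage (by fun_prop)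
  have hopen : IsOpen (L ∪ Y ∪ R) := ((hBo.preimage (by fun_prop)).union hYo).union hRo
  have hsub : L ∪ Y ∪ R ⊆ Icc 0 1 := by
    rintro x ((h | h) | h)
    · exact ⟨(hLsub h).1.le, by linarith [(hLsub h).2]⟩
    · exact ⟨by linarith [(hYsub h).1], by linarith [(hYsub h).2]⟩
    · exact ⟨by linarith [(hRsub h).1], (hRsub h).2.le⟩
  refine ⟨L ∪ Y ∪ R, hopen, ⟨hsub, hopen.measurableSet, ⟨fun x => ?_, s, ?_⟩, ?_, ?_, ?_⟩,
    ⟨0, ?_⟩, ⟨0, ?_⟩⟩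
  · change NoIntermediateDensityAt _ x
    rcases lt_or_ge x s with hx | hx
    · exact ((hBn _).affine_preimage hs' _).congr (hnearL hx)
    rcases le_or_gt x (1 - s) with hx' | hx'
    · exact (hD.rescale_noIntermediateDensityAt hs x).congr
        (hnearY (by linarith) (by linarith))
    · exact ((hBn _).affine_preimage (neg_ne_zero.2 hs') _).congr (hnearR hx')
  · rintro ⟨v, hv⟩
    exact hD.rescale_not_hasDensity hs
      ⟨v, hv.congr (hnearY (by linarith) (by linarith))⟩
  · refine sInf_eq_zero_of_forall_exists_lt hsub fun ε hε => ?_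
    obtain ⟨x, hx, hxε⟩ := hBε (ε / s) (div_pos hε hs0)
    refine ⟨s * x, .inl (.inl ?_), ?_⟩
    · rwa [hL, mem_preimage, add_zero, inv_mul_cancel_left₀ hs0.ne']
    · rw [lt_div_iff₀ hs0] at hxε
      linarith
  · refine sSup_eq_one_of_forall_exists_lt hsub fun ε hε => ?_
    obtain ⟨x, hx, hxε⟩ := hBε (ε / s) (div_pos hε hs0)
    refine ⟨1 - s * x, .inr ?_, ?_⟩
    · rwa [hR, mem_preimage, show -s⁻¹ * (1 - s * x) + s⁻¹ = x by field_simp; ring]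
    · rw [lt_div_iff₀ hs0] at hxε
      linarith
  · have hdLY : Disjoint L Y :=
      disjoint_left.2 fun x h h' => by linarith [(hLsub h).2, (hYsub h').1]
    have hdR : Disjoint (L ∪ Y) R := by
      refine disjoint_left.2 ?_
      rintro x (h | h) h'
      · linarith [(hLsub h).2, (hRsub h').1]
      · linarith [(hYsub h).2, (hRsub h').1]
    rw [measure_union hdR hRo.measurableSet, measure_union hdLY hYo.measurableSet,
      hD.volume_rescale hs, mul_div_cancel₀ _ hlen.ne', hL, hR, volume_affine_preimage hs',
      volume_affine_preimage (neg_ne_zero.2 hs'), hpB, inv_neg, abs_neg, inv_inv, abs_of_pos hs0,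
      ← ENNReal.ofReal_mul hs0.le, ← ENNReal.ofReal_add hsp0 (by linarith),
      ← ENNReal.ofReal_add (by linarith) hsp0]
    congr 1
    ring
  · refine (HasDensity.affine_preimage hs' 0 ?_).congr ((hnearL hs0).mono fun _ h => h.symm)
    simpa using hB0
  · refine (HasDensity.affine_preimage (neg_ne_zero.2 hs') s⁻¹ ?_).congr
      ((hnearR (sub_lt_self 1 hs0)).mono fun _ h => h.symm)
    simpa using hB0

/-- **Spongy subsets of `[0,1]` of any prescribed measure.** For every `m ∈ (0,1)` there is
a spongy `X ⊆ [0,1]` with `inf X = 0`, `sup X = 1` and `λ(X) = m`; it can be taken open or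
closed, and moreover either so that the density of `X` fails to exist at both `0` and `1`,
or so that the density of `X` exists at both `0` and `1`. -/
theorem stmt_15 (m : ℝ) (hm0 : 0 < m) (hm1 : m < 1) :
    (∃ X : Set ℝ, IsOpen X ∧ GoodSpongy m X ∧
      (¬ ∃ v : ℝ, HasDensity X 0 v) ∧ (¬ ∃ v : ℝ, HasDensity X 1 v)) ∧
    (∃ X : Set ℝ, IsClosed X ∧ GoodSpongy m X ∧
      (¬ ∃ v : ℝ, HasDensity X 0 v) ∧ (¬ ∃ v : ℝ, HasDensity X 1 v)) ∧
    (∃ X : Set ℝ, IsOpen X ∧ GoodSpongy m X ∧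
      (∃ v : ℝ, HasDensity X 0 v) ∧ (∃ v : ℝ, HasDensity X 1 v)) ∧
    (∃ X : Set ℝ, IsClosed X ∧ GoodSpongy m X ∧
      (∃ v : ℝ, HasDensity X 0 v) ∧ (∃ v : ℝ, HasDensity X 1 v)) := by
  obtain ⟨X, hXo, hX⟩ := exists_isOpen_isFilling hm0 hm1
  obtain ⟨Y, hYc, hY⟩ := exists_isClosed_isFilling hm0 hm1
  exact ⟨⟨X, hXo, hX.goodSpongy, hX.not_hasDensity_zero, hX.not_hasDensity_one⟩,
    ⟨Y, hYc, hY.goodSpongy, hY.not_hasDensity_zero, hY.not_hasDensity_one⟩,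
    exists_isOpen_goodSpongy_hasDensity hm0 hm1, exists_isClosed_goodSpongy_hasDensity hm0 hm1⟩
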